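/- Let d ≥ 1 and for each q ∈ {1,…,d} let m_q, n_q be positive integers and A^(q) a real m_q × n_q matrix. Given a tensor x : Fin n_1 × ⋯ × Fin n_d → ℝ, define z^(0) = x and, for q = 1,…,d, the tensor z^(q) indexed by (i_1,…,i_q, j_{q+1},…,j_d) ∈ Fin m_1 × ⋯ × Fin m_q × Fin n_{q+1} × ⋯ × Fin n_d by the sum-factorization kernel z^(q)_{(i_1,…,i_q,j_{q+1},…,j_d)} = Σ_{j_q ∈ Fin n_q} A^(q)_{i_q, j_q} · z^(q−1)_{(i_1,…,i_{q−1}, j_q, j_{q+1},…,j_d)}. Then for every multi-index (i_1,…,i_d) ∈ Fin m_1 × ⋯ × Fin m_d one has z^(d)_{(i_1,…,i_d)} = Σ_{j_1 ∈ Fin n_1} ⋯ Σ_{j_d ∈ Fin n_d} (∏_{q=1}^d A^(q)_{i_q, j_q}) · x_{(j_1,…,j_d)}; i.e., the sum-factorization (dimension-by-dimension) algorithm computes the full tensor contraction y_i = Σ_j (∏_q A^(q)_{i_q,j_q}) x_j. -/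

import Mathlib

open Finset

/-!
Fix the output multi-index. After the directions in a set `s` have been processed, the entry at `j`
is the sum, over the multi-indices that agree with `j` outside `s`, of the input weighted by the
factors from `s`. Processing a new direction `q ∉ s` splits the sum for `insert q s` according to
the value of the `q`-th coordinate.
-/

theorem forall_notMem_eq_update_iff {ι : Type*} {κ : ι → Type*} [DecidableEq ι] {s : Finset ι}
    {q : ι} (hq : q ∉ s) {j j' : ∀ k, κ k} {t : κ q} :
    (∀ k ∉ s, j' k = Function.update j q t k) ↔
      (∀ k ∉ insert q s, j' k = j k) ∧ j' q = t := by
  grind [Function.update_self, Function.update_of_ne]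

section PartialContraction

variable {ι R M : Type*} {κ : ι → Type*} [Fintype ι] [DecidableEq ι]
  [∀ k, Fintype (κ k)] [∀ k, DecidableEq (κ k)] [CommSemiring R] [AddCommMonoid M] [Module R M]

/-- The contraction of the tensor `x` against the vectors `a k` in the directions `k ∈ s` only. The
result is still indexed by full multi-indices `j`, but does not depend on the coordinates of `j`
in `s`. -/
def partialContraction (a : ∀ k, κ k → R) (s : Finset ι) (x : (∀ k, κ k) → M)
    (j : ∀ k, κ k) : M :=
  ∑ j' with ∀ k ∉ s, j' k = j k, (∏ k ∈ s, a k (j' k)) • x j'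

theorem partialContraction_empty (a : ∀ k, κ k → R) (x : (∀ k, κ k) → M) (j : ∀ k, κ k) :
    partialContraction a ∅ x j = x j := by
  simp [partialContraction, ← funext_iff, filter_eq']

theorem partialContraction_univ (a : ∀ k, κ k → R) (x : (∀ k, κ k) → M) (j : ∀ k, κ k) :
    partialContraction a univ x j = ∑ j', (∏ k, a k (j' k)) • x j' := by
  simp [partialContraction]

theorem partialContraction_insert (a : ∀ k, κ k → R) {s : Finset ι} {q : ι} (hq : q ∉ s)
    (x : (∀ k, κ k) → M) (j : ∀ k, κ k) :
    partialContraction a (insert q s) x j =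
      ∑ t, a q t • partialContraction a s x (Function.update j q t) := by
  unfold partialContraction
  rw [← sum_fiberwise _ fun j' => j' q]
  refine sum_congr rfl fun t _ => ?_
  simp only [forall_notMem_eq_update_iff hq, filter_filter, smul_sum]
  refine sum_congr rfl fun j' hj' => ?_
  obtain ⟨-, rfl⟩ := (mem_filter.mp hj').2
  rw [prod_insert hq, mul_smul]

end PartialContraction

section SumFactorization

variable {d : ℕ} {R M : Type*} [CommSemiring R] [AddCommMonoid M] [Module R M]

theorem iterate_eq_partialContraction {κ : Fin d → Type*} [∀ k, Fintype (κ k)]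
    [∀ k, DecidableEq (κ k)] (a : ∀ k, κ k → R) (z : ℕ → (∀ k, κ k) → M)
    (hz : ∀ (q : Fin d) j, z (q + 1) j = ∑ t, a q t • z q (Function.update j q t))
    {p : ℕ} (hp : p ≤ d) (j : ∀ k, κ k) :
    z p j = partialContraction a {k | (k : ℕ) < p} (z 0) j := by
  induction p generalizing j with
  | zero => simp [partialContraction_empty]
  | succ p ih =>
    have hinsert : ({k : Fin d | (k : ℕ) < p + 1} : Finset (Fin d)) =
        insert ⟨p, hp⟩ ({k : Fin d | (k : ℕ) < p} : Finset (Fin d)) := by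
      grind
    rw [hinsert, partialContraction_insert a (by simp), hz ⟨p, hp⟩]
    simp only [ih (Nat.le_of_succ_le hp)]

theorem sum_factorization_correct_general {μ ν : Fin d → Type*} [∀ k, Fintype (ν k)]
    (A : ∀ q, Matrix (μ q) (ν q) R) (x : (∀ k, ν k) → M)
    (z : ℕ → (∀ k, μ k) → (∀ k, ν k) → M)
    (hz0 : ∀ i j, z 0 i j = x j)
    (hzrec : ∀ (q : Fin d) i j,
      z (q + 1) i j = ∑ t, A q (i q) t • z q i (Function.update j q t))
    (i : ∀ k, μ k) (j : ∀ k, ν k) :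
    z d i j = ∑ j', (∏ q, A q (i q) (j' q)) • x j' := by
  classical
  have hz := iterate_eq_partialContraction (fun q => A q (i q)) (fun p => z p i)
    (fun q => hzrec q i) le_rfl j
  simpa [partialContraction_univ, hz0] using hz

end SumFactorization

/-- **Correctness of the sum-factorization (dimension-by-dimension) algorithm.**
Given matrices `A q : Matrix (Fin (m q)) (Fin (n q)) ℝ` for each direction `q : Fin d`
and an input tensor `x`, any family of intermediate tensors `z` satisfying
`z 0 = x` and the sum-factorization kernel recurrence
`z (q+1) i j = ∑ t, A q (i q) t * z q i (update j q t)`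
computes, at stage `d`, the full tensor contraction
`∑ j', (∏ q, A q (i q) (j' q)) * x j'`. -/
theorem sum_factorization_correct
    (d : ℕ) (hd : 1 ≤ d)
    (m n : Fin d → ℕ)
    (A : ∀ q : Fin d, Matrix (Fin (m q)) (Fin (n q)) ℝ)
    (x : (∀ k : Fin d, Fin (n k)) → ℝ)
    (z : ℕ → (∀ k : Fin d, Fin (m k)) → (∀ k : Fin d, Fin (n k)) → ℝ)
    (hz0 : ∀ i j, z 0 i j = x j)
    (hzrec : ∀ (q : Fin d) (i : ∀ k, Fin (m k)) (j : ∀ k, Fin (n k)),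
      z ((q : ℕ) + 1) i j =
        ∑ t : Fin (n q), A q (i q) t * z (q : ℕ) i (Function.update j q t)) :
    ∀ (i : ∀ k, Fin (m k)) (j : ∀ k, Fin (n k)),
      z d i j =
        ∑ j' : ∀ k, Fin (n k), (∏ q, A q (i q) (j' q)) * x j' :=
  sum_factorization_correct_general A x z hz0 hzrec
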